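/- arXiv:math/9509223 — 2 statements merged into one kernel-verified Lean document; each statement's English description precedes it below -/
import Mathlib

section
/- (q-binomial theorem) Let q and z be complex numbers with |q| < 1 and |z| < 1, and let a be any complex number. Then the series ∑_{n=0}^∞ ((a;q)_n/(q;q)_n) z^n converges and equals the quotient of infinite products (az;q)_∞/(z;q)_∞. -/
/-- The finite q-shifted factorial `(a;q)_n = ∏_{k=0}^{n-1} (1 - a q^k)`. -/
noncomputable def qPoch (a q : ℂ) (n : ℕ) : ℂ := ∏ k ∈ Finset.range n, (1 - a * q ^ k)

/-- The infinite q-shifted factorial `(a;q)_∞ = ∏_{k=0}^∞ (1 - a q^k)`. -/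
noncomputable def qPochInf (a q : ℂ) : ℂ := ∏' k : ℕ, (1 - a * q ^ k)

/-!
Let `f z` be the sum of the series and `c n` its coefficients. The recurrence
`(1 - q ^ (n + 1)) * c (n + 1) = (1 - a * q ^ n) * c n` amounts to the functional equation
`(1 - z) * f z = (1 - a * z) * f (z * q)`. Iterating it `N` times gives
`(z;q)_N * f z = (az;q)_N * f (z * q ^ N)`, and `f (z * q ^ N)` tends to `f 0 = 1` as `N → ∞`.
-/

open Filter Topology Asymptotics

section NormBounds

variable {R : Type*} [SeminormedRing R] [NormOneClass R] {r : R}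

theorem norm_mul_pow_le_of_norm_le_one (x : R) (hr : ‖r‖ ≤ 1) (n : ℕ) : ‖x * r ^ n‖ ≤ ‖x‖ :=
  calc ‖x * r ^ n‖ ≤ ‖x‖ * ‖r ^ n‖ := norm_mul_le _ _
    _ ≤ ‖x‖ := mul_le_of_le_one_right (norm_nonneg x)
      ((norm_pow_le r n).trans (pow_le_one₀ (norm_nonneg r) hr))

theorem one_sub_mul_pow_ne_zero {x : R} (hr : ‖r‖ ≤ 1) (hx : ‖x‖ < 1) (n : ℕ) :
    1 - x * r ^ n ≠ 0 := by
  have hlt : ‖x * r ^ n‖ < 1 := (norm_mul_pow_le_of_norm_le_one x hr n).trans_lt hx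
  refine sub_ne_zero.mpr fun h ↦ ?_
  rw [← h, norm_one] at hlt
  exact lt_irrefl 1 hlt

end NormBounds

section PowerSeries

variable {R : Type*} [NormedRing R] {r : R}

theorem summable_norm_mul_pow_of_tendsto {c : ℕ → R} {l : R} (hc : Tendsto c atTop (𝓝 l))
    (hr : ‖r‖ < 1) : Summable fun n ↦ ‖c n * r ^ n‖ := by
  have hbound : (fun n ↦ c n * r ^ n) =O[atTop] fun n ↦ ‖r ^ n‖ := by
    simpa only [one_mul] using
      (hc.isBigO_one ℝ).mul (isBigO_refl (fun n ↦ r ^ n) atTop).norm_right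
  exact summable_of_isBigO_nat (summable_norm_geometric_of_norm_lt_one hr) hbound.norm_left

theorem summable_norm_neg_mul_pow (x : R) (hr : ‖r‖ < 1) :
    Summable fun n : ℕ ↦ ‖-(x * r ^ n)‖ := by
  simpa only [norm_neg] using summable_norm_mul_pow_of_tendsto tendsto_const_nhds hr

theorem tendsto_tsum_mul_pow_nhds_zero [NormOneClass R] [NormMulClass R] [CompleteSpace R]
    {c : ℕ → R} (hr : r ≠ 0) (hc : Summable fun n ↦ ‖c n * r ^ n‖) :
    Tendsto (fun x ↦ ∑' n, c n * x ^ n) (𝓝 0) (𝓝 (c 0)) := by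
  have hsmall : ∀ᶠ x : R in 𝓝 0, ‖x‖ < ‖r‖ :=
    (continuous_norm.tendsto' 0 0 norm_zero).eventually_lt_const (norm_pos_iff.mpr hr)
  have hlim : Tendsto (fun x ↦ ∑' n, c n * x ^ n) (𝓝 0) (𝓝 (∑' n, c n * 0 ^ n)) := by
    refine tendsto_tsum_of_dominated_convergence hc
      (fun n ↦ ((continuous_pow n).tendsto 0).const_mul (c n)) ?_
    filter_upwards [hsmall] with x hx n
    rw [norm_mul, norm_mul, norm_pow, norm_pow]
    gcongr
  rwa [tsum_eq_single 0 fun n hn ↦ by simp [hn], pow_zero, mul_one] at hlim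

end PowerSeries

section QShiftedFactorial

variable {q : ℂ}

theorem qPoch_zero (a q : ℂ) : qPoch a q 0 = 1 :=
  Finset.prod_range_zero _

theorem qPoch_succ (a q : ℂ) (n : ℕ) : qPoch a q (n + 1) = qPoch a q n * (1 - a * q ^ n) :=
  Finset.prod_range_succ _ n

theorem tendsto_qPoch (a : ℂ) (hq : ‖q‖ < 1) : Tendsto (qPoch a q) atTop (𝓝 (qPochInf a q)) := by
  have hprod := multipliable_one_add_of_summable (summable_norm_neg_mul_pow a hq)
  simp only [← sub_eq_add_neg] at hprod
  exact hprod.hasProd.tendsto_prod_nat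

theorem qPochInf_ne_zero {a : ℂ} (hq : ‖q‖ < 1) (ha : ∀ n : ℕ, 1 - a * q ^ n ≠ 0) :
    qPochInf a q ≠ 0 := by
  simp only [sub_eq_add_neg] at ha
  simpa only [qPochInf, sub_eq_add_neg] using
    tprod_one_add_ne_zero_of_summable ha (summable_norm_neg_mul_pow a hq)

end QShiftedFactorial

/-- The basic hypergeometric series `₁φ₀(a; q, z) = ∑ (a;q)_n / (q;q)_n * z ^ n`, with the value `0`
where it does not converge. -/
noncomputable def qBinomialSeries (a q z : ℂ) : ℂ :=
  ∑' n : ℕ, qPoch a q n / qPoch q q n * z ^ n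

section QBinomialSeries

variable {q z : ℂ}

theorem one_sub_mul_qPoch_div_qPoch_succ (a : ℂ) {n : ℕ} (hn : 1 - q * q ^ n ≠ 0) :
    (1 - q * q ^ n) * (qPoch a q (n + 1) / qPoch q q (n + 1)) =
      (1 - a * q ^ n) * (qPoch a q n / qPoch q q n) := by
  rw [qPoch_succ, qPoch_succ, mul_div_mul_comm, mul_left_comm, mul_div_cancel₀ _ hn, mul_comm]

theorem summable_norm_qBinomialSeries (a : ℂ) (hq : ‖q‖ < 1) (hz : ‖z‖ < 1) :
    Summable fun n : ℕ ↦ ‖qPoch a q n / qPoch q q n * z ^ n‖ :=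
  summable_norm_mul_pow_of_tendsto
    ((tendsto_qPoch a hq).div (tendsto_qPoch q hq)
      (qPochInf_ne_zero hq (one_sub_mul_pow_ne_zero hq.le hq))) hz

theorem tendsto_qBinomialSeries_nhds_zero (a : ℂ) (hq : ‖q‖ < 1) :
    Tendsto (qBinomialSeries a q) (𝓝 0) (𝓝 1) := by
  have hhalf : ‖(1 / 2 : ℂ)‖ < 1 := by norm_num
  have hlim :=
    tendsto_tsum_mul_pow_nhds_zero (by norm_num) (summable_norm_qBinomialSeries a hq hhalf)
  rwa [qPoch_zero, qPoch_zero, div_one] at hlim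

theorem one_sub_mul_qBinomialSeries (a : ℂ) (hq : ‖q‖ < 1) (hz : ‖z‖ < 1) :
    (1 - z) * qBinomialSeries a q z = (1 - a * z) * qBinomialSeries a q (z * q) := by
  have hzq : ‖z * q‖ < 1 := by
    simpa using (norm_mul_pow_le_of_norm_le_one z hq.le 1).trans_lt hz
  let c : ℕ → ℂ := fun n ↦ qPoch a q n / qPoch q q n
  have hf : Summable fun n ↦ c n * z ^ n := (summable_norm_qBinomialSeries a hq hz).of_norm
  have hg : Summable fun n ↦ c n * (z * q) ^ n := (summable_norm_qBinomialSeries a hq hzq).of_norm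
  have hcoeff (n : ℕ) : c (n + 1) * z ^ (n + 1) - c (n + 1) * (z * q) ^ (n + 1) =
      z * (c n * z ^ n) - a * z * (c n * (z * q) ^ n) := by
    linear_combination
      z ^ (n + 1) * one_sub_mul_qPoch_div_qPoch_succ a (one_sub_mul_pow_ne_zero hq.le hq n)
  have hdiff : qBinomialSeries a q z - qBinomialSeries a q (z * q) =
      z * qBinomialSeries a q z - a * z * qBinomialSeries a q (z * q) :=
    calc qBinomialSeries a q z - qBinomialSeries a q (z * q)
        = ∑' n, (c n * z ^ n - c n * (z * q) ^ n) := (hf.tsum_sub hg).symm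
      _ = ∑' n, (c (n + 1) * z ^ (n + 1) - c (n + 1) * (z * q) ^ (n + 1)) := by
        rw [(hf.sub hg).tsum_eq_zero_add, pow_zero, pow_zero, sub_self, zero_add]
      _ = ∑' n, (z * (c n * z ^ n) - a * z * (c n * (z * q) ^ n)) := tsum_congr hcoeff
      _ = z * qBinomialSeries a q z - a * z * qBinomialSeries a q (z * q) := by
        rw [(hf.mul_left z).tsum_sub (hg.mul_left (a * z)), tsum_mul_left, tsum_mul_left]
        rfl
  linear_combination hdiff

theorem qPoch_mul_qBinomialSeries (a : ℂ) (hq : ‖q‖ < 1) (hz : ‖z‖ < 1) (N : ℕ) :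
    qPoch z q N * qBinomialSeries a q z =
      qPoch (a * z) q N * qBinomialSeries a q (z * q ^ N) := by
  induction N with
  | zero => simp [qPoch_zero]
  | succ N ih =>
    have hzq : ‖z * q ^ N‖ < 1 := (norm_mul_pow_le_of_norm_le_one z hq.le N).trans_lt hz
    have hstep := one_sub_mul_qBinomialSeries a hq hzq
    rw [qPoch_succ, qPoch_succ, pow_succ, ← mul_assoc z]
    linear_combination (1 - z * q ^ N) * ih + qPoch (a * z) q N * hstep

theorem qPochInf_mul_qBinomialSeries (a : ℂ) (hq : ‖q‖ < 1) (hz : ‖z‖ < 1) :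
    qPochInf z q * qBinomialSeries a q z = qPochInf (a * z) q := by
  have hzero : Tendsto (fun N ↦ z * q ^ N) atTop (𝓝 0) := by
    simpa using (tendsto_pow_atTop_nhds_zero_of_norm_lt_one hq).const_mul z
  have hleft := (tendsto_qPoch z hq).mul_const (qBinomialSeries a q z)
  have hright := (tendsto_qPoch (a * z) hq).mul
    ((tendsto_qBinomialSeries_nhds_zero a hq).comp hzero)
  rw [mul_one] at hright
  exact tendsto_nhds_unique hleft
    (hright.congr fun N ↦ (qPoch_mul_qBinomialSeries a hq hz N).symm)

end QBinomialSeries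

/-- The q-binomial theorem: for `|q| < 1` and `|z| < 1`,
`∑_{n=0}^∞ ((a;q)_n/(q;q)_n) z^n = (az;q)_∞/(z;q)_∞`. -/
theorem q_binomial_theorem (q z a : ℂ) (hq : ‖q‖ < 1) (hz : ‖z‖ < 1) :
    HasSum (fun n : ℕ => qPoch a q n / qPoch q q n * z ^ n)
      (qPochInf (a * z) q / qPochInf z q) := by
  have hne : qPochInf z q ≠ 0 := qPochInf_ne_zero hq (one_sub_mul_pow_ne_zero hq.le hz)
  have hsum : qBinomialSeries a q z = qPochInf (a * z) q / qPochInf z q :=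
    eq_div_of_mul_eq hne (by rw [mul_comm, qPochInf_mul_qBinomialSeries a hq hz])
  rw [← hsum]
  exact (summable_norm_qBinomialSeries a hq hz).of_norm.hasSum
end

section
/- (Product representation of the theta function ϑ₁) Let q be a complex number with |q| < 1, fix a branch q^{1/4} with (q^{1/4})⁴ = q, and let x be a real (or complex) number. Then 2 ∑_{n=0}^∞ (-1)^n q^{(n+1/2)²} sin((2n+1)x) = 2 q^{1/4} sin x ∏_{n=1}^∞ (1 - q^{2n})(1 - 2 q^{2n} cos 2x + q^{4n}), where q^{(n+1/2)²} means q^{1/4} · q^{n²+n}. -/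
/-!
Rothe's `q`-binomial theorem for `(-z q^{1-2N}; q²)_{2N}`, recentred at its middle term, is a
finite form of the Jacobi triple product:
`(-zq; q²)_N (-q/z; q²)_N = ∑_{|n| ≤ N} [2N, N+n]_{q²} q^{n²} zⁿ`.
As `N → ∞` each Gaussian binomial tends to `1 / (q²; q²)_∞` and all of them are uniformly bounded,
so dominated convergence yields the Jacobi triple product. At `z = -q e^{2ix}` the terms of index
`n` and `-n - 1` combine to a sine, while the factor `1 - e^{-2ix}` of the product supplies `sin x`.
-/

open Filter Finset Topology

lemma sq_pow_choose_two {M : Type*} [Monoid M] (q : M) (n : ℕ) :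
    (q ^ 2) ^ n.choose 2 * q ^ n = q ^ n ^ 2 := by
  have h : 2 * n.choose 2 + n = n ^ 2 := by
    induction n with
    | zero => rfl
    | succ n ih => rw [Nat.choose_succ_succ' n 1, Nat.choose_one_right]; linarith
  rw [← pow_mul, ← pow_add, h]

lemma zpow_sub_sq {G₀ : Type*} [GroupWithZero G₀] {q : G₀} (hq : q ≠ 0) (j N : ℕ) :
    q ^ ((j - N : ℤ) ^ 2) = q ^ j ^ 2 * q ^ N ^ 2 * ((q ^ 2) ^ (N * j))⁻¹ := by
  have h : (j - N : ℤ) ^ 2 = (j ^ 2 + N ^ 2 : ℕ) - (2 * (N * j) : ℕ) := by push_cast; ring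
  rw [h, zpow_sub₀ hq, zpow_natCast, zpow_natCast, pow_add, pow_mul, div_eq_mul_inv]

section GaussBinom

variable {R : Type*} [CommSemiring R]

/-- The Gaussian binomial coefficient `[n, k]_q`, defined by a `q`-Pascal rule so that it is a
polynomial in `q` and makes sense also where `(q; q)_n` vanishes. -/
def gaussBinom (q : R) : ℕ → ℕ → R
  | _, 0 => 1
  | 0, _ + 1 => 0
  | n + 1, k + 1 => gaussBinom q n k + q ^ (k + 1) * gaussBinom q n (k + 1)

lemma gaussBinom_zero_right (q : R) (n : ℕ) : gaussBinom q n 0 = 1 := by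
  cases n <;> rfl

lemma gaussBinom_succ_succ (q : R) (n k : ℕ) :
    gaussBinom q (n + 1) (k + 1) = gaussBinom q n k + q ^ (k + 1) * gaussBinom q n (k + 1) :=
  rfl

lemma gaussBinom_eq_zero_of_lt (q : R) {n k : ℕ} (h : n < k) : gaussBinom q n k = 0 := by
  induction n generalizing k with
  | zero => obtain ⟨k, rfl⟩ := Nat.exists_eq_add_one.mpr h; rfl
  | succ n ih =>
    obtain ⟨k, rfl⟩ := Nat.exists_eq_add_one.mpr (n.succ_pos.trans h)
    rw [gaussBinom_succ_succ, ih (by omega), ih (by omega), mul_zero, add_zero]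

lemma gaussBinom_self (q : R) (n : ℕ) : gaussBinom q n n = 1 := by
  induction n with
  | zero => rfl
  | succ n ih => rw [gaussBinom_succ_succ, ih, gaussBinom_eq_zero_of_lt q n.lt_succ_self]; ring

end GaussBinom

section QPochhammer

variable {R : Type*} [CommRing R]

/-- The finite `q`-Pochhammer symbol `(a; q)_n = (1 - a) (1 - a q) ⋯ (1 - a q^(n-1))`. -/
def qPochhammer (a q : R) (n : ℕ) : R := ∏ k ∈ range n, (1 - a * q ^ k)

lemma qPochhammer_zero (a q : R) : qPochhammer a q 0 = 1 := prod_range_zero _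

lemma qPochhammer_succ (a q : R) (n : ℕ) :
    qPochhammer a q (n + 1) = qPochhammer a q n * (1 - a * q ^ n) :=
  prod_range_succ _ n

lemma qPochhammer_add (a q : R) (m n : ℕ) :
    qPochhammer a q (m + n) = qPochhammer a q m * qPochhammer (a * q ^ m) q n := by
  simp only [qPochhammer, prod_range_add, pow_add, mul_assoc]

lemma qPochhammer_succ' (a q : R) (n : ℕ) :
    qPochhammer a q (n + 1) = (1 - a) * qPochhammer (a * q) q n := by
  rw [add_comm, qPochhammer_add, qPochhammer_succ, qPochhammer_zero]
  simp

lemma gaussBinom_add_mul_qPochhammer_mul_qPochhammer (q : R) (m k : ℕ) :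
    gaussBinom q (k + m) k * qPochhammer q q k * qPochhammer q q m = qPochhammer q q (k + m) := by
  induction k generalizing m with
  | zero => simp [gaussBinom_zero_right, qPochhammer_zero]
  | succ k ihk =>
    induction m with
    | zero => simp [gaussBinom_self, qPochhammer_zero]
    | succ m ihm =>
      have hk := ihk (m + 1)
      rw [show k + (m + 1) = k + 1 + m by ring] at hk
      rw [← add_assoc, gaussBinom_succ_succ, qPochhammer_succ q q (k + 1 + m)]
      rw [qPochhammer_succ q q k] at ihm ⊢
      rw [qPochhammer_succ q q m] at hk ⊢
      linear_combination (1 - q * q ^ k) * hk + q ^ (k + 1) * (1 - q * q ^ m) * ihm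

theorem qPochhammer_neg_eq_sum_gaussBinom (x q : R) (n : ℕ) :
    qPochhammer (-x) q n =
      ∑ j ∈ range (n + 1), gaussBinom q n j * q ^ j.choose 2 * x ^ j := by
  induction n generalizing x with
  | zero => simp [qPochhammer_zero, gaussBinom_zero_right]
  | succ n ih =>
    have hlast : ∑ j ∈ range (n + 1), gaussBinom q n j * q ^ j.choose 2 * (x * q) ^ j =
        1 + ∑ j ∈ range (n + 1),
          gaussBinom q n (j + 1) * q ^ (j + 1).choose 2 * (x * q) ^ (j + 1) := by
      rw [sum_range_succ', sum_range_succ _ n, gaussBinom_eq_zero_of_lt q n.lt_succ_self]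
      simp [gaussBinom_zero_right, add_comm]
    rw [qPochhammer_succ', neg_mul, ih, sub_neg_eq_add, add_mul, one_mul, sum_range_succ' _ (n + 1)]
    nth_rw 1 [hlast]
    have hterm (j : ℕ) : gaussBinom q (n + 1) (j + 1) * q ^ (j + 1).choose 2 * x ^ (j + 1) =
        gaussBinom q n (j + 1) * q ^ (j + 1).choose 2 * (x * q) ^ (j + 1) +
          x * (gaussBinom q n j * q ^ j.choose 2 * (x * q) ^ j) := by
      rw [gaussBinom_succ_succ, Nat.choose_succ_succ' j 1, Nat.choose_one_right]
      ring
    simp only [hterm, sum_add_distrib, mul_sum, gaussBinom_zero_right, Nat.choose_zero_succ,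
      pow_zero, mul_one]
    ring

end QPochhammer

section Field

variable {K : Type*} [Field K]

lemma gaussBinom_add_eq_div {q : K} {k m : ℕ} (hk : qPochhammer q q k ≠ 0)
    (hm : qPochhammer q q m ≠ 0) :
    gaussBinom q (k + m) k =
      qPochhammer q q (k + m) / (qPochhammer q q k * qPochhammer q q m) := by
  rw [eq_div_iff (mul_ne_zero hk hm), ← mul_assoc, gaussBinom_add_mul_qPochhammer_mul_qPochhammer]

lemma qPochhammer_mul_inv_pow {a q : K} (ha : a ≠ 0) (hq : q ≠ 0) (n : ℕ) :
    qPochhammer (a * (q ^ n)⁻¹) q n =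
      (-a) ^ n * (q ^ (n + 1).choose 2)⁻¹ * qPochhammer (a⁻¹ * q) q n := by
  induction n with
  | zero => simp [qPochhammer_zero]
  | succ n ih =>
    have hshift : a * (q ^ (n + 1))⁻¹ * q = a * (q ^ n)⁻¹ := by
      field_simp
      ring
    rw [qPochhammer_succ', hshift, ih, qPochhammer_succ, Nat.choose_succ_succ' (n + 1) 1,
      Nat.choose_one_right]
    field_simp
    ring

theorem qPochhammer_mul_qPochhammer_eq_sum_range {q z : K} (hq : q ≠ 0) (hz : z ≠ 0) (N : ℕ) :
    qPochhammer (-(z * q)) (q ^ 2) N * qPochhammer (-(z⁻¹ * q)) (q ^ 2) N =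
      ∑ j ∈ range (2 * N + 1), gaussBinom (q ^ 2) (2 * N) j *
        (q ^ ((j - N : ℤ) ^ 2) * z ^ (j - N : ℤ)) := by
  have hq2 : q ^ 2 ≠ 0 := pow_ne_zero 2 hq
  have hrothe := qPochhammer_add (-(z * q) * ((q ^ 2) ^ N)⁻¹) (q ^ 2) N N
  have hinv : (-(z * q))⁻¹ * q ^ 2 = -(z⁻¹ * q) := by field_simp
  rw [inv_mul_cancel_right₀ (pow_ne_zero N hq2), qPochhammer_mul_inv_pow (by simp [hq, hz]) hq2,
    hinv, ← two_mul, neg_mul, qPochhammer_neg_eq_sum_gaussBinom, neg_neg] at hrothe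
  have hexp : (q ^ 2) ^ (N + 1).choose 2 = q ^ N ^ 2 * q ^ N := by
    rw [Nat.choose_succ_succ' N 1, Nat.choose_one_right, add_comm, pow_add,
      ← sq_pow_choose_two q N]
    ring
  have hterm (j : ℕ) : gaussBinom (q ^ 2) (2 * N) j *
      (q ^ ((j - N : ℤ) ^ 2) * z ^ (j - N : ℤ)) =
        q ^ N ^ 2 * (z ^ N)⁻¹ * (gaussBinom (q ^ 2) (2 * N) j * (q ^ 2) ^ j.choose 2 *
          (z * q * ((q ^ 2) ^ N)⁻¹) ^ j) := by
    rw [zpow_sub_sq hq, ← sq_pow_choose_two q j, zpow_sub₀ hz, zpow_natCast, zpow_natCast,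
      mul_pow, mul_pow, inv_pow, pow_mul (q ^ 2) N j]
    ring
  simp only [hterm, ← mul_sum]
  rw [hrothe, hexp, mul_pow]
  field_simp

theorem jacobi_triple_product_finite {q z : K} (hq : q ≠ 0) (hz : z ≠ 0) (N : ℕ) :
    qPochhammer (-(z * q)) (q ^ 2) N * qPochhammer (-(z⁻¹ * q)) (q ^ 2) N =
      ∑ n ∈ Icc (-N : ℤ) N, gaussBinom (q ^ 2) (2 * N) (N + n).toNat *
        (q ^ n ^ 2 * z ^ n) := by
  rw [qPochhammer_mul_qPochhammer_eq_sum_range hq hz]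
  exact sum_nbij' (fun j => (j - N : ℤ)) (fun n => (N + n).toNat) (by grind) (by grind) (by grind)
    (by grind) fun j _ => by simp

lemma mul_zpow_sq_mul_zpow_add_neg_add_one {q u : K} (hq : q ≠ 0) (hu : u ≠ 0) (n : ℕ) :
    u * (q ^ (n : ℤ) ^ 2 * (-(q * u ^ 2)) ^ (n : ℤ) +
        q ^ (-(n + 1 : ℤ)) ^ 2 * (-(q * u ^ 2)) ^ (-(n + 1 : ℤ))) =
      (-1) ^ n * q ^ (n ^ 2 + n) * (u ^ (2 * n + 1) - (u ^ (2 * n + 1))⁻¹) := by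
  have hnonneg : u * (q ^ (n : ℤ) ^ 2 * (-(q * u ^ 2)) ^ (n : ℤ)) =
      (-1) ^ n * q ^ (n ^ 2 + n) * u ^ (2 * n + 1) := by
    simp only [← Nat.cast_pow, zpow_natCast]
    rw [neg_pow]
    ring
  have hneg : u * (q ^ (-(n + 1 : ℤ)) ^ 2 * (-(q * u ^ 2)) ^ (-(n + 1 : ℤ))) =
      -((-1) ^ n * q ^ (n ^ 2 + n) * (u ^ (2 * n + 1))⁻¹) := by
    rw [neg_sq, zpow_neg, ← Nat.cast_add_one]
    simp only [← Nat.cast_pow, zpow_natCast]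
    rw [neg_pow, mul_inv, ← inv_pow, inv_neg_one]
    field_simp
    ring
  rw [mul_add, hnonneg, hneg]
  ring

end Field

section Analysis

lemma summable_pow_sq_mul_pow {r : ℝ} (hr₀ : 0 ≤ r) (hr₁ : r < 1) (s : ℝ) :
    Summable fun n : ℕ => r ^ n ^ 2 * s ^ n := by
  have hlim : Tendsto (fun n : ℕ => |r ^ n * s|) atTop (𝓝 0) := by
    simpa using ((tendsto_pow_atTop_nhds_zero_of_lt_one hr₀ hr₁).mul_const s).abs
  refine Summable.of_norm_bounded_eventually_nat summable_geometric_two ?_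
  filter_upwards [hlim.eventually_le_const one_half_pos] with n hn
  rw [pow_two, pow_mul, ← mul_pow, norm_pow, Real.norm_eq_abs]
  gcongr

variable {𝕜 : Type*} [NormedField 𝕜]

/-- The infinite `q`-Pochhammer symbol `(a; q)_∞`, meaningful for `‖q‖ < 1`. -/
noncomputable def qPochhammerInf (a q : 𝕜) : 𝕜 := ∏' k : ℕ, (1 - a * q ^ k)

lemma summable_norm_mul_pow {q : 𝕜} (hq : ‖q‖ < 1) (a : 𝕜) :
    Summable fun k : ℕ => ‖-(a * q ^ k)‖ := by
  simpa only [norm_neg, norm_mul, norm_pow] using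
    (summable_geometric_of_lt_one (norm_nonneg q) hq).mul_left ‖a‖

lemma summable_norm_zpow_sq_mul_zpow {q : 𝕜} (hq : ‖q‖ < 1) (z : 𝕜) :
    Summable fun n : ℤ => ‖q ^ n ^ 2 * z ^ n‖ := by
  have hsq (n : ℕ) : (n : ℤ) ^ 2 = (n ^ 2 : ℕ) := by push_cast; rfl
  simp only [norm_mul, norm_zpow]
  refine summable_int_iff_summable_nat_and_neg.mpr ⟨?_, ?_⟩
  · simpa only [hsq, zpow_natCast] using summable_pow_sq_mul_pow (norm_nonneg q) hq ‖z‖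
  · simpa only [neg_sq, hsq, zpow_neg, zpow_natCast, inv_pow] using
      summable_pow_sq_mul_pow (norm_nonneg q) hq ‖z‖⁻¹

lemma one_sub_mul_pow_self_ne_zero {q : 𝕜} (hq : ‖q‖ < 1) (k : ℕ) : 1 - q * q ^ k ≠ 0 := by
  intro h
  have hlt : ‖q ^ (k + 1)‖ < 1 := by
    simpa using pow_lt_one₀ (norm_nonneg q) hq k.succ_ne_zero
  rw [pow_succ', ← sub_eq_zero.mp h, norm_one] at hlt
  exact lt_irrefl 1 hlt

lemma qPochhammer_self_ne_zero {q : 𝕜} (hq : ‖q‖ < 1) (n : ℕ) : qPochhammer q q n ≠ 0 :=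
  prod_ne_zero_iff.mpr fun k _ => one_sub_mul_pow_self_ne_zero hq k

variable [CompleteSpace 𝕜]

lemma multipliable_one_sub_mul_pow {q : 𝕜} (hq : ‖q‖ < 1) (a : 𝕜) :
    Multipliable fun k : ℕ => 1 - a * q ^ k := by
  simpa only [sub_eq_add_neg] using multipliable_one_add_of_summable (summable_norm_mul_pow hq a)

lemma tendsto_qPochhammer {q : 𝕜} (hq : ‖q‖ < 1) (a : 𝕜) :
    Tendsto (qPochhammer a q) atTop (𝓝 (qPochhammerInf a q)) :=
  (multipliable_one_sub_mul_pow hq a).tendsto_prod_tprod_nat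

lemma qPochhammerInf_eq_mul {q : 𝕜} (hq : ‖q‖ < 1) (a : 𝕜) :
    qPochhammerInf a q = (1 - a) * qPochhammerInf (a * q) q := by
  refine tendsto_nhds_unique ((tendsto_qPochhammer hq a).comp (tendsto_add_atTop_nat 1)) ?_
  simpa only [Function.comp_def, qPochhammer_succ'] using
    (tendsto_qPochhammer hq (a * q)).const_mul (1 - a)

lemma qPochhammerInf_self_ne_zero {q : 𝕜} (hq : ‖q‖ < 1) : qPochhammerInf q q ≠ 0 := by
  simp only [qPochhammerInf, sub_eq_add_neg]
  refine tprod_one_add_ne_zero_of_summable (fun k => ?_) (summable_norm_mul_pow hq q)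
  simpa only [sub_eq_add_neg] using one_sub_mul_pow_self_ne_zero hq k

lemma exists_norm_gaussBinom_le {q : 𝕜} (hq : ‖q‖ < 1) :
    ∃ C : ℝ, ∀ n k, ‖gaussBinom q n k‖ ≤ C := by
  have hne := qPochhammer_self_ne_zero hq
  have hlim := tendsto_qPochhammer hq q
  obtain ⟨A, hA⟩ := hlim.norm.bddAbove_range
  obtain ⟨B, hB⟩ := (hlim.inv₀ (qPochhammerInf_self_ne_zero hq)).norm.bddAbove_range
  replace hA (n : ℕ) : ‖qPochhammer q q n‖ ≤ A := hA ⟨n, rfl⟩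
  replace hB (n : ℕ) : ‖(qPochhammer q q n)⁻¹‖ ≤ B := hB ⟨n, rfl⟩
  have hA₀ : 0 ≤ A := (norm_nonneg _).trans (hA 0)
  have hB₀ : 0 ≤ B := (norm_nonneg _).trans (hB 0)
  refine ⟨A * (B * B), fun n k => ?_⟩
  rcases lt_or_ge n k with hnk | hkn
  · rw [gaussBinom_eq_zero_of_lt q hnk, norm_zero]
    positivity
  · obtain ⟨m, rfl⟩ := Nat.exists_eq_add_of_le hkn
    rw [gaussBinom_add_eq_div (hne _) (hne _), div_eq_mul_inv, mul_inv, norm_mul, norm_mul]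
    gcongr
    exacts [hA _, hB _, hB _]

lemma tendsto_gaussBinom_add {ι : Type*} {l : Filter ι} {u v : ι → ℕ} {q : 𝕜} (hq : ‖q‖ < 1)
    (hu : Tendsto u l atTop) (hv : Tendsto v l atTop) :
    Tendsto (fun i => gaussBinom q (u i + v i) (u i)) l (𝓝 (qPochhammerInf q q)⁻¹) := by
  have hne := qPochhammerInf_self_ne_zero hq
  have hlim := tendsto_qPochhammer hq q
  have h := (hlim.comp (hu.atTop_add_atTop hv)).div ((hlim.comp hu).mul (hlim.comp hv))
    (mul_ne_zero hne hne)
  rw [div_mul_cancel_left₀ hne] at h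
  exact h.congr fun i =>
    (gaussBinom_add_eq_div (qPochhammer_self_ne_zero hq _) (qPochhammer_self_ne_zero hq _)).symm

lemma tendsto_gaussBinom_two_mul {q : 𝕜} (hq : ‖q‖ < 1) (n : ℤ) :
    Tendsto (fun N : ℕ => gaussBinom q (2 * N) (N + n).toNat) atTop
      (𝓝 (qPochhammerInf q q)⁻¹) := by
  have htop (m : ℤ) : Tendsto (fun N : ℕ => (N + m).toNat) atTop atTop :=
    tendsto_atTop.mpr fun b => by
      filter_upwards [eventually_ge_atTop (b + m.natAbs)] with N hN
      omega
  refine (tendsto_gaussBinom_add hq (htop n) (htop (-n))).congr' ?_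
  filter_upwards [eventually_ge_atTop n.natAbs] with N hN
  congr 1
  omega

lemma tendsto_sum_gaussBinom_mul {q : 𝕜} (hq : ‖q‖ < 1) {f : ℤ → 𝕜} (hf : Summable (‖f ·‖)) :
    Tendsto (fun N : ℕ => ∑ n ∈ Icc (-N : ℤ) N, gaussBinom q (2 * N) (N + n).toNat * f n) atTop
      (𝓝 ((qPochhammerInf q q)⁻¹ * ∑' n, f n)) := by
  obtain ⟨C, hC⟩ := exists_norm_gaussBinom_le hq
  rw [← tsum_mul_left]
  conv => enter [1, N]; rw [sum_eq_tsum_indicator]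
  refine tendsto_tsum_of_dominated_convergence (hf.mul_left C) (fun n => ?_)
    (Eventually.of_forall fun N n => ?_)
  · refine ((tendsto_gaussBinom_two_mul hq n).mul_const (f n)).congr' ?_
    filter_upwards [eventually_ge_atTop n.natAbs] with N hN
    rw [Set.indicator_of_mem (mem_coe.mpr (mem_Icc.mpr (by omega)))]
  · refine (norm_indicator_le_norm_self _ n).trans ?_
    rw [norm_mul]
    gcongr
    exact hC _ _

theorem hasSum_jacobi_triple_product {q z : 𝕜} (hq : ‖q‖ < 1) (hz : z ≠ 0) :
    HasSum (fun n : ℤ => q ^ n ^ 2 * z ^ n)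
      (qPochhammerInf (q ^ 2) (q ^ 2) *
        (qPochhammerInf (-(z * q)) (q ^ 2) * qPochhammerInf (-(z⁻¹ * q)) (q ^ 2))) := by
  rcases eq_or_ne q 0 with rfl | hq₀
  · convert hasSum_single (0 : ℤ) fun n hn => ?_ using 1
    · simp [qPochhammerInf]
    · simp [zero_zpow _ (pow_ne_zero 2 hn)]
  have hq2 : ‖q ^ 2‖ < 1 := by simpa using pow_lt_one₀ (norm_nonneg q) hq two_ne_zero
  have hsum := summable_norm_zpow_sq_mul_zpow hq z
  have hlim := (tendsto_qPochhammer hq2 (-(z * q))).mul (tendsto_qPochhammer hq2 (-(z⁻¹ * q)))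
  simp only [jacobi_triple_product_finite hq₀ hz] at hlim
  rw [tendsto_nhds_unique hlim (tendsto_sum_gaussBinom_mul hq2 hsum),
    mul_inv_cancel_left₀ (qPochhammerInf_self_ne_zero hq2)]
  exact hsum.of_norm.hasSum

lemma qPochhammerInf_mul_qPochhammerInf_mul_qPochhammerInf_inv {q w : 𝕜} (hq : ‖q‖ < 1)
    (hw : w ≠ 0) :
    qPochhammerInf q q * (qPochhammerInf (w * q) q * qPochhammerInf (w⁻¹ * q) q) =
      ∏' n : ℕ, ((1 - q ^ (n + 1)) * (1 - q ^ (n + 1) * (w + w⁻¹) + (q ^ (n + 1)) ^ 2)) := by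
  have hmul := multipliable_one_sub_mul_pow hq
  unfold qPochhammerInf
  rw [← (hmul _).tprod_mul (hmul _), ← (hmul _).tprod_mul ((hmul _).mul (hmul _))]
  refine tprod_congr fun n => ?_
  field_simp
  ring

theorem hasSum_neg_one_pow_mul_sub_inv {q u : 𝕜} (hq : ‖q‖ < 1) (hq₀ : q ≠ 0) (hu : u ≠ 0) :
    HasSum (fun n : ℕ => (-1) ^ n * q ^ (n ^ 2 + n) * (u ^ (2 * n + 1) - (u ^ (2 * n + 1))⁻¹))
      ((u - u⁻¹) * ∏' n : ℕ, ((1 - (q ^ 2) ^ (n + 1)) *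
        (1 - (q ^ 2) ^ (n + 1) * (u ^ 2 + (u ^ 2)⁻¹) + ((q ^ 2) ^ (n + 1)) ^ 2))) := by
  have hq2 : ‖q ^ 2‖ < 1 := by simpa using pow_lt_one₀ (norm_nonneg q) hq two_ne_zero
  have hz : -(q * u ^ 2) ≠ 0 := by simp [hq₀, hu]
  have hz_mul : -(-(q * u ^ 2) * q) = u ^ 2 * q ^ 2 := by ring
  have hz_inv : -((-(q * u ^ 2))⁻¹ * q) = (u ^ 2)⁻¹ := by field_simp
  have hjacobi := ((hasSum_jacobi_triple_product hq hz).nat_add_neg_add_one).mul_left u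
  rw [hz_mul, hz_inv, qPochhammerInf_eq_mul hq2 (u ^ 2)⁻¹] at hjacobi
  have hvalue (a b c : 𝕜) : (u - u⁻¹) * (a * (b * c)) = u * (a * (b * ((1 - (u ^ 2)⁻¹) * c))) := by
    field_simp
  rw [← qPochhammerInf_mul_qPochhammerInf_mul_qPochhammerInf_inv hq2 (pow_ne_zero 2 hu), hvalue]
  exact hjacobi.congr_fun fun n => (mul_zpow_sq_mul_zpow_add_neg_add_one hq₀ hu n).symm

end Analysis

lemma exp_mul_I_pow_sub_inv (x : ℂ) (n : ℕ) :
    Complex.exp (x * Complex.I) ^ n - (Complex.exp (x * Complex.I) ^ n)⁻¹ =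
      2 * Complex.I * Complex.sin (n * x) := by
  rw [← Complex.exp_nat_mul, ← Complex.exp_neg, mul_right_comm, Complex.two_sin, mul_assoc,
    mul_assoc, Complex.I_mul_I, neg_mul, mul_assoc]
  ring

lemma exp_mul_I_pow_add_inv (x : ℂ) (n : ℕ) :
    Complex.exp (x * Complex.I) ^ n + (Complex.exp (x * Complex.I) ^ n)⁻¹ =
      2 * Complex.cos (n * x) := by
  rw [← Complex.exp_nat_mul, ← Complex.exp_neg, Complex.two_cos, neg_mul, mul_assoc]

theorem hasSum_neg_one_pow_mul_sin {q : ℂ} (hq : ‖q‖ < 1) (hq₀ : q ≠ 0) (x : ℂ) :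
    HasSum (fun n : ℕ => (-1) ^ n * q ^ (n ^ 2 + n) * Complex.sin ((2 * n + 1) * x))
      (Complex.sin x * ∏' n : ℕ, ((1 - q ^ (2 * (n + 1))) *
        (1 - 2 * q ^ (2 * (n + 1)) * Complex.cos (2 * x) + q ^ (4 * (n + 1))))) := by
  have h := hasSum_neg_one_pow_mul_sub_inv hq hq₀ (Complex.exp_ne_zero (x * Complex.I))
  have hsin := exp_mul_I_pow_sub_inv x 1
  rw [pow_one, Nat.cast_one, one_mul] at hsin
  simp only [exp_mul_I_pow_sub_inv, exp_mul_I_pow_add_inv, hsin] at h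
  have hprod (n : ℕ) : (1 - (q ^ 2) ^ (n + 1)) *
      (1 - (q ^ 2) ^ (n + 1) * (2 * Complex.cos ((2 : ℕ) * x)) + ((q ^ 2) ^ (n + 1)) ^ 2) =
        (1 - q ^ (2 * (n + 1))) *
          (1 - 2 * q ^ (2 * (n + 1)) * Complex.cos (2 * x) + q ^ (4 * (n + 1))) := by
    push_cast
    ring
  rw [tprod_congr hprod, mul_assoc] at h
  rw [← hasSum_mul_left_iff (mul_ne_zero two_ne_zero Complex.I_ne_zero)]
  refine h.congr_fun fun n => ?_
  push_cast
  ring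

/-- Product representation of the theta function `ϑ₁`: for `|q| < 1`, a fixed fourth
root `q4` of `q` (so `q^{(n+1/2)²} = q4 · q^{n²+n}`), and any complex `x`,
`2 ∑_{n=0}^∞ (-1)^n q^{(n+1/2)²} sin((2n+1)x)
  = 2 q^{1/4} sin x ∏_{n=1}^∞ (1-q^{2n})(1 - 2q^{2n} cos 2x + q^{4n})`. -/
theorem theta1_product (q q4 x : ℂ) (hq : ‖q‖ < 1) (hq4 : q4 ^ 4 = q) :
    HasSum
      (fun n : ℕ => 2 * (-1) ^ n * (q4 * q ^ (n ^ 2 + n)) *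
        Complex.sin ((2 * (n : ℂ) + 1) * x))
      (2 * q4 * Complex.sin x *
        ∏' n : ℕ,
          ((1 - q ^ (2 * (n + 1))) *
            (1 - 2 * q ^ (2 * (n + 1)) * Complex.cos (2 * x) + q ^ (4 * (n + 1))))) := by
  rcases eq_or_ne q 0 with rfl | hq₀
  · rw [pow_eq_zero_iff four_ne_zero] at hq4
    simp [hq4, hasSum_zero]
  · rw [mul_assoc (2 * q4)]
    refine ((hasSum_neg_one_pow_mul_sin hq hq₀ x).mul_left (2 * q4)).congr_fun fun n => ?_
    ring
end
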